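/- Let n ≥ 2 and let γ₀ ∈ C¹(ℝ/ℤ,ℝⁿ) be an injective regular curve. Then there exist an open neighborhood U of γ₀ in C¹(ℝ/ℤ,ℝⁿ), a constant c > 0, and ε₀ > 0 such that for every γ ∈ U and every (u,w) ∈ (ℝ/ℤ) × [−1/2,1/2]: (i) min(|γ(u+w)−γ(u)|, d_γ(u+w,u)) ≥ c·|w|, (ii) |γ'(u)| ≥ c, and (iii) d_γ(u+w,u) = L(γ|_{[u,u+w]}) whenever |w| ≤ ε₀; in particular every γ ∈ U is injective and regular. -/

import Mathlib

open MeasureTheory Filter Set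
open scoped RealInnerProductSpace ENNReal Topology

noncomputable section

/-- `ℝⁿ` -/
abbrev Rn (n : ℕ) := EuclideanSpace ℝ (Fin n)

variable {n : ℕ}

/-- A 1-periodic curve is injective as a map on `ℝ/ℤ`. -/
def PerInjective (γ : ℝ → Rn n) : Prop :=
  ∀ u v : ℝ, γ u = γ v → ∃ k : ℤ, v = u + k

/-- `γ` is a regular curve: `γ'(u) ≠ 0` for all `u`. -/
def RegularCurve (γ : ℝ → Rn n) : Prop := ∀ u : ℝ, deriv γ u ≠ 0

/-- `γ` is parametrized by arc-length: `|γ'(u)| = 1` for all `u`. -/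
def ArcLengthParam (γ : ℝ → Rn n) : Prop := ∀ u : ℝ, ‖deriv γ u‖ = 1

/-- The length `L(γ) = ∫₀¹ |γ'(θ)| dθ` of the closed curve `γ`. -/
def curveLen (γ : ℝ → Rn n) : ℝ := ∫ θ in (0:ℝ)..1, ‖deriv γ θ‖

/-- The arc length `L(γ|_{[u,u+w]}) = |∫_u^{u+w} |γ'(θ)| dθ|`. -/
def arcLen (γ : ℝ → Rn n) (u w : ℝ) : ℝ := |∫ θ in u..(u + w), ‖deriv γ θ‖|

/-- The intrinsic distance `d_γ(u+w,u)`. -/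
def idist (γ : ℝ → Rn n) (u w : ℝ) : ℝ :=
  min (arcLen γ u w) (curveLen γ - arcLen γ u w)

/-- The integrand of the O'Hara energy `E^α`. -/
def ohIntegrand (α : ℝ) (γ : ℝ → Rn n) (u w : ℝ) : ℝ :=
  (1 / ‖γ (u + w) - γ u‖ ^ α - 1 / idist γ u w ^ α) * ‖deriv γ (u + w)‖ * ‖deriv γ u‖

/-- The O'Hara energy `E^α`, with values in `[0,∞]`. -/
def oharaE (α : ℝ) (γ : ℝ → Rn n) : ℝ≥0∞ :=
  ∫⁻ u in Ioc (0:ℝ) 1, ∫⁻ w in Ioo (-(1:ℝ)/2) (1/2), ENNReal.ofReal (ohIntegrand α γ u w)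

/-- The O'Hara energy `E^α` as a real number. -/
def oharaER (α : ℝ) (γ : ℝ → Rn n) : ℝ := (oharaE α γ).toReal

/-- `[−1/2,−ε] ∪ [ε,1/2]`, the `w`-section of `U_ε`. -/
def Wset (ε : ℝ) : Set ℝ := Icc (-(1:ℝ)/2) (-ε) ∪ Icc ε (1/2)

/-- The truncated O'Hara energy `E^α_ε`, an integral over `U_ε`. -/
def oharaEeps (α ε : ℝ) (γ : ℝ → Rn n) : ℝ :=
  ∫ u in Ioc (0:ℝ) 1, ∫ w in Wset ε, ohIntegrand α γ u w

/-- `F` has directional (Gâteaux) derivative `d` at `γ` in direction `h`. -/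
def HasDirDeriv (F : (ℝ → Rn n) → ℝ) (γ h : ℝ → Rn n) (d : ℝ) : Prop :=
  Tendsto (fun τ : ℝ => (F (γ + τ • h) - F γ) / τ) (𝓝[≠] (0:ℝ)) (𝓝 d)

/-- Squared Gagliardo seminorm `[f]²_{H^{s,2}}` of a 1-periodic map. -/
def gagliardoSq (s : ℝ) {E : Type*} [NormedAddCommGroup E] (f : ℝ → E) : ℝ≥0∞ :=
  ∫⁻ u in Ioc (0:ℝ) 1, ∫⁻ w in Ioo (-(1:ℝ)/2) (1/2),
    ENNReal.ofReal (‖f (u + w) - f u‖ ^ 2 / |w| ^ (1 + 2 * s))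

/-- Membership in the fractional Sobolev space `H^{1+σ,2}(ℝ/ℤ,ℝⁿ)`, `σ ∈ (0,1)`:
a 1-periodic `C¹` function whose derivative has finite Gagliardo seminorm of order `σ`. -/
def MemH1 (σ : ℝ) (γ : ℝ → Rn n) : Prop :=
  Function.Periodic γ 1 ∧ ContDiff ℝ 1 γ ∧ gagliardoSq σ (deriv γ) < ⊤

/-- The norm of `H^{1+σ,2}(ℝ/ℤ,ℝⁿ)`. -/
def H1Norm (σ : ℝ) (γ : ℝ → Rn n) : ℝ :=
  Real.sqrt (∫ u in Ioc (0:ℝ) 1, (‖γ u‖ ^ 2 + ‖deriv γ u‖ ^ 2)) +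
    Real.sqrt ((gagliardoSq σ (deriv γ)).toReal)

/-- Membership of a 1-periodic map in `L²(ℝ/ℤ)`. -/
def MemL2per {E : Type*} [NormedAddCommGroup E] (f : ℝ → E) : Prop :=
  Function.Periodic f 1 ∧ AEStronglyMeasurable f (volume : Measure ℝ) ∧
    IntegrableOn (fun u => ‖f u‖ ^ 2) (Ioc (0:ℝ) 1) volume

/-- Membership in the fractional Sobolev space `H^{s,2}(ℝ/ℤ)`, `s ∈ (0,1)`. -/
def MemHs0 (s : ℝ) {E : Type*} [NormedAddCommGroup E] (f : ℝ → E) : Prop :=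
  MemL2per f ∧ gagliardoSq s f < ⊤

/-- The norm of `H^{s,2}(ℝ/ℤ)` for `s ∈ (0,1)`: `‖f‖_{L²} + [f]_{H^{s,2}}`. -/
def Hs0Norm (s : ℝ) {E : Type*} [NormedAddCommGroup E] (f : ℝ → E) : ℝ :=
  Real.sqrt (∫ u in Ioc (0:ℝ) 1, ‖f u‖ ^ 2) + Real.sqrt ((gagliardoSq s f).toReal)

/-- The `k`-th Fourier coefficient (`j`-th component) of a 1-periodic curve. -/
def fCoef (γ : ℝ → Rn n) (k : ℤ) (j : Fin n) : ℂ :=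
  ∫ u in (0:ℝ)..1, (γ u j : ℂ) * Complex.exp ((-2) * (Real.pi : ℂ) * Complex.I * (k : ℂ) * (u : ℂ))

/-- Membership in `H^{s,2}(ℝ/ℤ,ℝⁿ)` via the Fourier characterization:
`((1+|k|²)^{s/2} γ̂(k))_k ∈ ℓ²`. -/
def MemHF (s : ℝ) (γ : ℝ → Rn n) : Prop :=
  Function.Periodic γ 1 ∧ Continuous γ ∧
    Summable (fun k : ℤ => (1 + (k : ℝ) ^ 2) ^ s * ∑ j, ‖fCoef γ k j‖ ^ 2)

/-- The squared Fourier norm of `H^{s,2}(ℝ/ℤ,ℝⁿ)`. -/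
def fNormSq (s : ℝ) (γ : ℝ → Rn n) : ℝ :=
  ∑' k : ℤ, (1 + (k : ℝ) ^ 2) ^ s * ∑ j, ‖fCoef γ k j‖ ^ 2

/-- C¹-norm of a 1-periodic map. -/
def c1Norm (f : ℝ → Rn n) : ℝ := ⨆ u : Icc (0:ℝ) 1, (‖f u.1‖ + ‖deriv f u.1‖)

/-- The integrand of `Q(γ,h)`. -/
def Qintegrand (α : ℝ) (γ h : ℝ → Rn n) (u w : ℝ) : ℝ :=
  ⟪deriv γ u, deriv h u⟫ / |w| ^ α
    - ⟪γ (u + w) - γ u, h (u + w) - h u⟫ / |w| ^ (α + 2)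

/-- The integrand of `R(γ,h)`. -/
def Rintegrand (α : ℝ) (γ h : ℝ → Rn n) (u w : ℝ) : ℝ :=
  2 * ⟪deriv γ u, deriv h u⟫ * (1 / ‖γ (u + w) - γ u‖ ^ α - 1 / |w| ^ α)
    - α * ⟪γ (u + w) - γ u, h (u + w) - h u⟫ *
        (1 / ‖γ (u + w) - γ u‖ ^ (α + 2) - 1 / |w| ^ (α + 2))

/-- `R(γ,h)`, an absolutely convergent double integral over `(ℝ/ℤ) × [−1/2,1/2]`. -/
def Rval (α : ℝ) (γ h : ℝ → Rn n) : ℝ :=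
  ∫ p in (Ioc (0:ℝ) 1) ×ˢ (Icc (-(1:ℝ)/2) (1/2)), Rintegrand α γ h p.1 p.2

/-!
A regular `C¹` curve is locally antilipschitz by strict differentiability, so an injective one is
antilipschitz on the compact circle `AddCircle T`. A `C¹`-small perturbation of it adds a map with
small Lipschitz constant on the circle, hence is still antilipschitz, with a uniform constant `c⁻¹`.
This chord estimate contains the remaining lower bounds: injectivity is immediate, passing to the
limit in difference quotients gives `c ≤ |γ'|`, and each of the two arcs joining a pair of points is
at least as long as their chord. Finally, an arc of length at most half of `L(γ)` is the shorter
one, and `L(γ) ≥ c T` while the arc over `[u, u + w]` has length at most `|w| sup |γ'|`.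
-/

open Asymptotics
open scoped NNReal

section Antilipschitz

variable {X Y : Type*} [PseudoMetricSpace X] [CompactSpace X] [MetricSpace Y] {f : X → Y}

/- Off the diagonal `dist (f x) (f y)` is locally bounded below, by injectivity; on the diagonal the
local estimate is the hypothesis. Compactness of `X × X` makes the constants uniform. -/
theorem exists_antilipschitzWith_of_isBigO_nhds_diag (hf : Continuous f)
    (hinj : Function.Injective f)
    (hdiag : ∀ x, (fun p : X × X => dist p.1 p.2) =O[𝓝 (x, x)]
      fun p => dist (f p.1) (f p.2)) :
    ∃ K > 0, AntilipschitzWith K f := by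
  have hlocal (p : X × X) :
      (fun q : X × X => dist q.1 q.2) =O[𝓝 p] fun q => dist (f q.1) (f q.2) := by
    obtain ⟨x, y⟩ := p
    rcases eq_or_ne x y with rfl | hxy
    · exact hdiag x
    · have hne : dist (f x) (f y) ≠ 0 := dist_ne_zero.mpr (hinj.ne hxy)
      have hdist : Tendsto (fun q : X × X => dist q.1 q.2) (𝓝 (x, y)) (𝓝 (dist x y)) :=
        continuous_dist.tendsto (x, y)
      have hdist_image : Tendsto (fun q : X × X => dist (f q.1) (f q.2)) (𝓝 (x, y))
          (𝓝 (dist (f x) (f y))) :=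
        ((hf.comp continuous_fst).dist (hf.comp continuous_snd)).tendsto (x, y)
      exact (hdist.isBigO_one ℝ).trans
        ((isBigO_const_const 1 hne _).trans
          ((isEquivalent_const_iff_tendsto hne).mpr hdist_image).isBigO_symm)
  have hglobal : (fun p : X × X => dist p.1 p.2) =O[𝓟 univ] fun p => dist (f p.1) (f p.2) := by
    refine isCompact_univ.induction_on (p := fun s => _ =O[𝓟 s] _) ?_ ?_ ?_ ?_
    · simp
    · exact fun s t hst ht => ht.mono (principal_mono.mpr hst)
    · exact fun s t hs ht => by rw [← sup_principal]; exact hs.sup ht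
    · intro p _
      obtain ⟨C, hC⟩ := (hlocal p).bound
      exact ⟨_, mem_nhdsWithin_of_mem_nhds hC, IsBigO.of_bound C (mem_principal_self _)⟩
  obtain ⟨C, hC, hbound⟩ := hglobal.exists_pos
  lift C to ℝ≥0 using hC.le
  refine ⟨C, hC, AntilipschitzWith.of_le_mul_dist fun x y => ?_⟩
  simpa only [Real.norm_of_nonneg dist_nonneg] using
    isBigOWith_principal.mp hbound (x, y) (mem_univ _)

end Antilipschitz

section Lift

variable {Y : Type*} [PseudoMetricSpace Y] {f : ℝ → Y} {T : ℝ} {K : ℝ≥0}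

theorem lipschitzWith_lift (hper : Function.Periodic f T) (hf : LipschitzWith K f) :
    LipschitzWith K (hper.lift : AddCircle T → Y) := by
  refine LipschitzWith.of_dist_le_mul fun x y => ?_
  induction x using QuotientAddGroup.induction_on with | _ s
  induction y using QuotientAddGroup.induction_on with | _ t
  have hshift : f (t + round (T⁻¹ * (s - t)) * T) = f t := hper.int_mul _ t
  calc dist (f s) (f t) = dist (f s) (f (t + round (T⁻¹ * (s - t)) * T)) := by rw [hshift]
    _ ≤ K * dist s (t + round (T⁻¹ * (s - t)) * T) := hf.dist_le_mul _ _
    _ = K * dist (s : AddCircle T) t := by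
      rw [Real.dist_eq, dist_eq_norm, ← AddCircle.coe_sub, AddCircle.norm_eq, sub_add_eq_sub_sub]

theorem inv_mul_abs_le_dist_of_antilipschitzWith_lift (hper : Function.Periodic f T)
    (hf : AntilipschitzWith K (hper.lift : AddCircle T → Y)) (hT : T ≠ 0) (u : ℝ) {w : ℝ}
    (hw : |w| ≤ |T| / 2) : K⁻¹ * |w| ≤ dist (f (u + w)) (f u) :=
  calc K⁻¹ * |w| = K⁻¹ * dist ((u + w : ℝ) : AddCircle T) u := by
        rw [dist_eq_norm, ← AddCircle.coe_sub, add_sub_cancel_left,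
          (AddCircle.norm_coe_eq_abs_iff T hT).mpr hw]
    _ ≤ dist (f (u + w)) (f u) := hf.mul_le_dist _ _

end Lift

variable {E : Type*} [NormedAddCommGroup E] [NormedSpace ℝ E] {γ γ₀ : ℝ → E} {T : ℝ}

theorem periodic_deriv (hper : Function.Periodic γ T) : Function.Periodic (deriv γ) T := fun u => by
  rw [← deriv_comp_add_const, hper.funext]

theorem exists_pos_forall_norm_deriv_le (hper : Function.Periodic γ T) (hT : T ≠ 0)
    (hC1 : ContDiff ℝ 1 γ) : ∃ M > 0, ∀ u, ‖deriv γ u‖ ≤ M := by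
  obtain ⟨M, hM₀, hM⟩ := ((periodic_deriv hper).isBounded_of_continuous hT
    (hC1.continuous_deriv le_rfl)).exists_pos_norm_le
  exact ⟨M, hM₀, fun u => hM _ (mem_range_self u)⟩

theorem isBigO_dist_lift_of_hasStrictDerivAt (hper : Function.Periodic γ T) {u : ℝ} {γ' : E}
    (hγ : HasStrictDerivAt γ γ' u) (hγ' : γ' ≠ 0) :
    (fun p : AddCircle T × AddCircle T => dist p.1 p.2) =O[𝓝 (↑u, ↑u)]
      fun p => dist (hper.lift p.1) (hper.lift p.2) := by
  have hmap : 𝓝 ((u : AddCircle T), (u : AddCircle T)) =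
      map (Prod.map (↑) (↑)) (𝓝 (u, u)) := by
    rw [nhds_prod_eq, nhds_prod_eq, QuotientAddGroup.nhds_eq, prod_map_map_eq]
    rfl
  rw [hmap, isBigO_map]
  have hquot : (fun p : ℝ × ℝ => dist (p.1 : AddCircle T) p.2) =O[𝓝 (u, u)]
      fun p => p.1 - p.2 :=
    isBigO_of_le _ fun p => by
      rw [Real.norm_of_nonneg dist_nonneg, dist_eq_norm, ← AddCircle.coe_sub]
      exact QuotientAddGroup.norm_mk_le_norm
  have hstrict : (fun p : ℝ × ℝ => p.1 - p.2) =O[𝓝 (u, u)] fun p => γ p.1 - γ p.2 :=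
    (HasDerivAtFilter.isTheta_sub hγ hγ').isBigO_symm
  simpa only [Function.comp_def, Prod.map, Function.Periodic.lift_coe, dist_eq_norm (γ _)] using
    (hquot.trans hstrict).norm_right

theorem exists_antilipschitzWith_lift [Fact (0 < T)] (hper : Function.Periodic γ T)
    (hC1 : ContDiff ℝ 1 γ) (hinj : Function.Injective hper.lift) (hreg : ∀ u, deriv γ u ≠ 0) :
    ∃ K > 0, AntilipschitzWith K (hper.lift : AddCircle T → E) := by
  refine exists_antilipschitzWith_of_isBigO_nhds_diag
    (continuous_coinduced_dom.mpr hC1.continuous) hinj fun x => ?_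
  induction x using QuotientAddGroup.induction_on with | _ u
  exact isBigO_dist_lift_of_hasStrictDerivAt hper
    (hC1.contDiffAt.hasStrictDerivAt one_ne_zero) (hreg u)

theorem antilipschitzWith_lift_of_norm_deriv_sub_le {K r : ℝ≥0}
    (hper₀ : Function.Periodic γ₀ T) (hγ₀ : Differentiable ℝ γ₀)
    (hanti : AntilipschitzWith K (hper₀.lift : AddCircle T → E))
    (hper : Function.Periodic γ T) (hγ : Differentiable ℝ γ)
    (hclose : ∀ u, ‖deriv γ u - deriv γ₀ u‖ ≤ r) (hr : r < K⁻¹) :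
    AntilipschitzWith (K⁻¹ - r)⁻¹ (hper.lift : AddCircle T → E) := by
  have hlip : LipschitzWith r (γ - γ₀) :=
    lipschitzWith_of_nnnorm_deriv_le (hγ.sub hγ₀) fun u => by
      rw [deriv_sub (hγ u) (hγ₀ u)]
      exact hclose u
  refine hanti.add_sub_lipschitzWith (Kg := r) ?_ hr
  have hsub : (hper.lift : AddCircle T → E) - hper₀.lift = (hper.sub hper₀).lift :=
    funext fun x => QuotientAddGroup.induction_on x fun _ => rfl
  rw [hsub]
  exact lipschitzWith_lift (hper.sub hper₀) hlip

theorem exists_pos_forall_antilipschitzWith_lift [Fact (0 < T)] (hper₀ : Function.Periodic γ₀ T)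
    (hC1 : ContDiff ℝ 1 γ₀) (hinj : Function.Injective hper₀.lift) (hreg : ∀ u, deriv γ₀ u ≠ 0) :
    ∃ c : ℝ≥0, 0 < c ∧ ∀ (γ : ℝ → E) (hper : Function.Periodic γ T), Differentiable ℝ γ →
      (∀ u, ‖deriv γ u - deriv γ₀ u‖ ≤ c) →
        AntilipschitzWith c⁻¹ (hper.lift : AddCircle T → E) := by
  obtain ⟨K, hK, hanti⟩ := exists_antilipschitzWith_lift hper₀ hC1 hinj hreg
  have hinv : 0 < K⁻¹ := inv_pos.mpr hK
  refine ⟨K⁻¹ / 2, half_pos hinv, fun γ hper hγ hclose => ?_⟩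
  have hhalf : K⁻¹ - K⁻¹ / 2 = K⁻¹ / 2 := tsub_eq_of_eq_add (add_halves _).symm
  simpa only [hhalf] using antilipschitzWith_lift_of_norm_deriv_sub_le hper₀
    (hC1.differentiable one_ne_zero) hanti hper hγ hclose (NNReal.half_lt_self hinv.ne')

theorem le_norm_of_hasDerivAt_of_eventually_le {γ' : E} {u c : ℝ} (hγ : HasDerivAt γ γ' u)
    (hc : ∀ᶠ w in 𝓝 0, c * |w| ≤ ‖γ (u + w) - γ u‖) : c ≤ ‖γ'‖ := by
  refine ge_of_tendsto hγ.tendsto_slope_zero.norm ?_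
  filter_upwards [hc.filter_mono nhdsWithin_le_nhds, self_mem_nhdsWithin] with w hw hw0
  rwa [norm_smul, norm_inv, Real.norm_eq_abs, le_inv_mul_iff₀ (abs_pos.mpr hw0), mul_comm]

theorem inv_le_norm_deriv_of_antilipschitzWith_lift {K : ℝ≥0} (hper : Function.Periodic γ T)
    (hanti : AntilipschitzWith K (hper.lift : AddCircle T → E)) (hT : T ≠ 0) {u : ℝ}
    (hγ : DifferentiableAt ℝ γ u) : K⁻¹ ≤ ‖deriv γ u‖ := by
  refine le_norm_of_hasDerivAt_of_eventually_le hγ.hasDerivAt ?_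
  filter_upwards [Metric.closedBall_mem_nhds (0 : ℝ) (half_pos (abs_pos.mpr hT))] with w hw
  rw [← dist_eq_norm]
  exact inv_mul_abs_le_dist_of_antilipschitzWith_lift hper hanti hT u
    (mem_closedBall_zero_iff.mp hw)

/-- The length `∫₀ᵀ |γ'|` of a closed curve of period `T`. -/
def closedLength (T : ℝ) (γ : ℝ → E) : ℝ := ∫ θ in (0 : ℝ)..T, ‖deriv γ θ‖

/-- The length of the arc of `γ` between the parameters `u` and `u + w`; the absolute value allows
for negative `w`. -/
def arcLength (γ : ℝ → E) (u w : ℝ) : ℝ := |∫ θ in u..(u + w), ‖deriv γ θ‖|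

/-- The intrinsic distance between `γ (u + w)` and `γ u` on a closed curve of period `T`: the length
of the shorter of the two arcs joining them, provided that `|w| ≤ T`. For `T = 1` and `E = Rn n` it
unfolds to `idist γ u w`. -/
def intrinsicDist (T : ℝ) (γ : ℝ → E) (u w : ℝ) : ℝ :=
  min (arcLength γ u w) (closedLength T γ - arcLength γ u w)

theorem arcLength_add_neg (γ : ℝ → E) (u w : ℝ) : arcLength γ (u + w) (-w) = arcLength γ u w := by
  rw [arcLength, arcLength, add_neg_cancel_right, intervalIntegral.integral_symm, abs_neg]

theorem arcLength_of_nonneg (γ : ℝ → E) (u : ℝ) {w : ℝ} (hw : 0 ≤ w) :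
    arcLength γ u w = ∫ θ in u..(u + w), ‖deriv γ θ‖ :=
  abs_of_nonneg <|
    intervalIntegral.integral_nonneg (le_add_of_nonneg_right hw) fun _ _ => norm_nonneg _

theorem arcLength_le_mul_abs {M : ℝ} (hM : ∀ u, ‖deriv γ u‖ ≤ M) (u w : ℝ) :
    arcLength γ u w ≤ M * |w| := by
  simpa only [arcLength, Real.norm_eq_abs, add_sub_cancel_left] using
    intervalIntegral.norm_integral_le_of_norm_le_const (a := u) (b := u + w)
      (f := fun θ => ‖deriv γ θ‖) fun θ _ => (norm_norm _).trans_le (hM θ)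

theorem intervalIntegrable_norm_deriv (hC1 : ContDiff ℝ 1 γ) (a b : ℝ) :
    IntervalIntegrable (fun θ => ‖deriv γ θ‖) volume a b :=
  (hC1.continuous_deriv le_rfl).norm.intervalIntegrable a b

theorem mul_le_closedLength (hC1 : ContDiff ℝ 1 γ) {c : ℝ} (hc : ∀ u, c ≤ ‖deriv γ u‖)
    (hT : 0 ≤ T) : c * T ≤ closedLength T γ := by
  simpa only [closedLength, intervalIntegral.integral_const, smul_eq_mul, sub_zero,
    mul_comm T] using
    intervalIntegral.integral_mono_on hT intervalIntegrable_const
      (intervalIntegrable_norm_deriv hC1 0 T) fun θ _ => hc θ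

theorem norm_sub_le_integral_norm_deriv (hC1 : ContDiff ℝ 1 γ) {a b : ℝ} (hab : a ≤ b) :
    ‖γ b - γ a‖ ≤ ∫ θ in a..b, ‖deriv γ θ‖ :=
  norm_sub_le_integral_of_norm_deriv_le_of_le hab hC1.continuous.continuousOn
    (hC1.differentiable one_ne_zero).differentiableOn (ae_of_all _ fun _ _ => le_rfl)
    (intervalIntegrable_norm_deriv hC1 a b)

theorem closedLength_sub_arcLength (hper : Function.Periodic γ T) (hC1 : ContDiff ℝ 1 γ) (u : ℝ)
    {w : ℝ} (hw : 0 ≤ w) :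
    closedLength T γ - arcLength γ u w = ∫ θ in (u + w)..(u + T), ‖deriv γ θ‖ := by
  have hperiod : closedLength T γ = ∫ θ in u..(u + T), ‖deriv γ θ‖ := by
    simpa only [closedLength, Function.comp_apply, zero_add] using
      ((periodic_deriv hper).comp norm).intervalIntegral_add_eq 0 u
  rw [hperiod, arcLength_of_nonneg γ u hw, intervalIntegral.integral_interval_sub_left] <;>
    exact intervalIntegrable_norm_deriv hC1 _ _

theorem norm_sub_le_intrinsicDist (hper : Function.Periodic γ T) (hC1 : ContDiff ℝ 1 γ) {u w : ℝ}
    (hw : |w| ≤ T) : ‖γ (u + w) - γ u‖ ≤ intrinsicDist T γ u w := by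
  wlog hw₀ : 0 ≤ w generalizing u w
  · have hrev := this (u := u + w) (w := -w) (by rwa [abs_neg]) (by linarith)
    rwa [intrinsicDist, arcLength_add_neg, add_neg_cancel_right, norm_sub_rev] at hrev
  rw [abs_of_nonneg hw₀] at hw
  refine le_min ?_ ?_
  · rw [arcLength_of_nonneg γ u hw₀]
    exact norm_sub_le_integral_norm_deriv hC1 (le_add_of_nonneg_right hw₀)
  · rw [closedLength_sub_arcLength hper hC1 u hw₀, norm_sub_rev, ← hper u]
    exact norm_sub_le_integral_norm_deriv hC1 (by linarith)

theorem intrinsicDist_eq_arcLength_of_norm_deriv_le (hC1 : ContDiff ℝ 1 γ) (hT : 0 ≤ T)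
    {c M : ℝ} (hM₀ : 0 < M) (hc : ∀ u, c ≤ ‖deriv γ u‖) (hM : ∀ u, ‖deriv γ u‖ ≤ M) {u w : ℝ}
    (hw : |w| ≤ c * T / (2 * M)) : intrinsicDist T γ u w = arcLength γ u w := by
  refine min_eq_left ?_
  have harc : arcLength γ u w ≤ M * |w| := arcLength_le_mul_abs hM u w
  have hlen : c * T ≤ closedLength T γ := mul_le_closedLength hC1 hc hT
  rw [le_div_iff₀ (by positivity)] at hw
  linarith

theorem perInjective_iff_injective_lift {γ : ℝ → Rn n} (hper : Function.Periodic γ 1) :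
    PerInjective γ ↔ Function.Injective hper.lift := by
  have hcoe (u v : ℝ) : (u : UnitAddCircle) = v ↔ ∃ k : ℤ, v = u + k := by
    simp only [QuotientAddGroup.eq, AddSubgroup.mem_zmultiples_iff, zsmul_one,
      eq_neg_add_iff_add_eq, eq_comm]
  refine ⟨fun h x y => ?_, fun h u v huv => (hcoe u v).mp (h huv)⟩
  induction x using QuotientAddGroup.induction_on with | _ u
  induction y using QuotientAddGroup.induction_on with | _ v
  exact fun huv => (hcoe u v).mpr (h u v huv)

theorem statement7_general [hT : Fact (0 < T)]
    (hper : Function.Periodic γ₀ T) (hC1 : ContDiff ℝ 1 γ₀)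
    (hinj : Function.Injective hper.lift) (hreg : ∀ u, deriv γ₀ u ≠ 0) :
    ∃ r > (0 : ℝ), ∃ c > (0 : ℝ), ∃ ε₀ > (0 : ℝ),
      ∀ (γ : ℝ → E) (hγ : Function.Periodic γ T), ContDiff ℝ 1 γ →
        (∀ u, ‖deriv γ u - deriv γ₀ u‖ ≤ r) →
        (∀ u w : ℝ, |w| ≤ T / 2 →
          c * |w| ≤ min ‖γ (u + w) - γ u‖ (intrinsicDist T γ u w) ∧
          c ≤ ‖deriv γ u‖ ∧
          (|w| ≤ ε₀ → intrinsicDist T γ u w = arcLength γ u w)) ∧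
        Function.Injective hγ.lift ∧ ∀ u, deriv γ u ≠ 0 := by
  have hT₀ : 0 < T := hT.out
  obtain ⟨c, hc, hanti⟩ := exists_pos_forall_antilipschitzWith_lift hper hC1 hinj hreg
  obtain ⟨M, hM₀, hM⟩ := exists_pos_forall_norm_deriv_le hper hT₀.ne' hC1
  refine ⟨c, hc, c, hc, c * T / (2 * (M + c)), by positivity, fun γ hγ hγC1 hclose => ?_⟩
  have hγd : Differentiable ℝ γ := hγC1.differentiable one_ne_zero
  specialize hanti γ hγ hγd hclose
  have hspeed (u : ℝ) : c ≤ ‖deriv γ u‖ := by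
    simpa only [inv_inv] using inv_le_norm_deriv_of_antilipschitzWith_lift hγ hanti hT₀.ne' (hγd u)
  have hspeed_le (u : ℝ) : ‖deriv γ u‖ ≤ M + c :=
    (norm_le_norm_add_norm_sub' _ (deriv γ₀ u)).trans (add_le_add (hM u) (hclose u))
  refine ⟨fun u w hw => ⟨?_, hspeed u, ?_⟩, hanti.injective,
    fun u => norm_pos_iff.mp ((NNReal.coe_pos.mpr hc).trans_le (hspeed u))⟩
  · have hchord : c * |w| ≤ ‖γ (u + w) - γ u‖ := by
      simpa only [inv_inv, dist_eq_norm] using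
        inv_mul_abs_le_dist_of_antilipschitzWith_lift hγ hanti hT₀.ne' u
          (hw.trans_eq (by rw [abs_of_pos hT₀]))
    exact le_min hchord (hchord.trans (norm_sub_le_intrinsicDist hγ hγC1 (by linarith)))
  · exact intrinsicDist_eq_arcLength_of_norm_deriv_le hγC1 hT₀.le (by positivity) hspeed hspeed_le

/-- Around an injective regular `C¹` curve `γ₀` there are a `C¹`-neighborhood,
a constant `c > 0` and `ε₀ > 0` with the stated uniform bi-Lipschitz-type estimates; in
particular every curve in the neighborhood is injective and regular. -/
theorem statement7 {n : ℕ} (hn : 2 ≤ n) {γ₀ : ℝ → Rn n}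
    (hper : Function.Periodic γ₀ 1) (hC1 : ContDiff ℝ 1 γ₀)
    (hinj : PerInjective γ₀) (hreg : RegularCurve γ₀) :
    ∃ r > (0:ℝ), ∃ c > (0:ℝ), ∃ ε₀ > (0:ℝ),
      ∀ γ : ℝ → Rn n, Function.Periodic γ 1 → ContDiff ℝ 1 γ →
        (∀ u : ℝ, ‖γ u - γ₀ u‖ + ‖deriv γ u - deriv γ₀ u‖ < r) →
        (∀ u w : ℝ, |w| ≤ 1/2 →
          (c * |w| ≤ min ‖γ (u + w) - γ u‖ (idist γ u w)) ∧
          c ≤ ‖deriv γ u‖ ∧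
          (|w| ≤ ε₀ → idist γ u w = arcLen γ u w)) ∧
        PerInjective γ ∧ RegularCurve γ := by
  obtain ⟨r, hr, c, hc, ε₀, hε₀, h⟩ := statement7_general hper hC1
    ((perInjective_iff_injective_lift hper).mp hinj) hreg
  refine ⟨r, hr, c, hc, ε₀, hε₀, fun γ hγ hγC1 hclose => ?_⟩
  rw [perInjective_iff_injective_lift hγ]
  exact h γ hγ hγC1 fun u => (le_add_of_nonneg_left (norm_nonneg _)).trans (hclose u).le

end
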